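/- If an equation set E′ is obtained from a finite equation set E by one of the actions (1), (3), (4), (5) of MMA, or by one of the actions (5a), (5b) of MMA⁻, then E and E′ have exactly the same solutions (in particular, E is unifiable if and only if E′ is). -/

import Mathlib

/-- Finite first-order terms: variables and function applications.
A function symbol is identified by its name together with the number of
arguments it is applied to (fixed arity). -/
inductive Trm : Type where
  | var : ℕ → Trm
  | fn  : ℕ → List Trm → Trm

namespace Trm

/-- `|t|`: the number of occurrences of variables and function symbols
(including constants) in the term `t`. -/
def size : Trm → ℕ
  | .var _ => 1
  | .fn _ ts => 1 + (ts.attach.map (fun ⟨t, _⟩ => size t)).sum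
decreasing_by
  have := List.sizeOf_lt_of_mem ‹_ ∈ ts›
  simp [Trm.fn.sizeOf_spec]; omega

/-- Application of a substitution (a map from variables to terms) to a term. -/
def subst (σ : ℕ → Trm) : Trm → Trm
  | .var x => σ x
  | .fn f ts => .fn f (ts.attach.map (fun ⟨t, _⟩ => subst σ t))
decreasing_by
  have := List.sizeOf_lt_of_mem ‹_ ∈ ts›
  simp [Trm.fn.sizeOf_spec]; omega

/-- The number of occurrences of the variable `x` in a term. -/
def count (x : ℕ) : Trm → ℕ
  | .var y => if y = x then 1 else 0
  | .fn _ ts => (ts.attach.map (fun ⟨t, _⟩ => count x t)).sum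
decreasing_by
  have := List.sizeOf_lt_of_mem ‹_ ∈ ts›
  simp [Trm.fn.sizeOf_spec]; omega

/-- `Occurs x t` : the variable `x` occurs in the term `t`. -/
inductive Occurs (x : ℕ) : Trm → Prop where
  | var : Occurs x (.var x)
  | fn {f : ℕ} {ts : List Trm} {t : Trm} : t ∈ ts → Occurs x t → Occurs x (.fn f ts)

end Trm

/-- The set of variables occurring in a term. -/
def varSet (t : Trm) : Set ℕ := {x | Trm.Occurs x t}

/-- The set of variables occurring in a list (tuple) of terms. -/
def varsL (l : List Trm) : Set ℕ := {x | ∃ t ∈ l, Trm.Occurs x t}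

/-- The number of occurrences of a variable in a list (tuple) of terms. -/
def countL (x : ℕ) (l : List Trm) : ℕ := (l.map (Trm.count x)).sum

/-- A term is ground if no variable occurs in it. -/
def Ground (t : Trm) : Prop := ∀ x, ¬ Trm.Occurs x t

/-- An equation set: a set of equations `s ≐ t` between terms,
represented as pairs of terms. -/
abbrev EqSet := Set (Trm × Trm)

/-- `σ` is a solution (unifier) of the equation set `E`. -/
def Solves (σ : ℕ → Trm) (E : EqSet) : Prop :=
  ∀ e ∈ E, Trm.subst σ e.1 = Trm.subst σ e.2

/-- `E` is unifiable: it has a unifier. -/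
def Unifiable (E : EqSet) : Prop := ∃ σ, Solves σ E

/-- `θ` is a most general unifier of `E`. -/
def IsMgu (θ : ℕ → Trm) (E : EqSet) : Prop :=
  Solves θ E ∧ ∀ σ, Solves σ E → ∃ ρ, ∀ x, σ x = Trm.subst ρ (θ x)

/-- The equation set `s ≐̈ t` pairing corresponding members of two
equal-length tuples of terms. -/
def zipEqs (s t : List Trm) : EqSet := {e | e ∈ s.zip t}

/-- The substitution `{X/t}` mapping `X` to `t` and every other variable
to itself. -/
def single (X : ℕ) (t : Trm) : ℕ → Trm :=
  fun y => if y = X then t else .var y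

/-- The equation set `Eθ`: the substitution applied to both sides of
every equation of `E`. -/
def substE (θ : ℕ → Trm) (E : EqSet) : EqSet :=
  (fun e => (Trm.subst θ e.1, Trm.subst θ e.2)) '' E

/-- One step of the Martelli–Montanari algorithm MMA: actions (1), (3), (4),
(5).  (Actions (2) and (6) halt with failure and produce no next equation
set; their applicability is captured by `ClashApp` and `OccApp` below.)
Two function applications carry the same function symbol iff they have the
same name and the same number of arguments (fixed arity). -/
inductive MMAStep : EqSet → EqSet → Prop where
  /-- Action (1): replace `f(s1,…,sn) ≐ f(t1,…,tn)` by `s1 ≐ t1, …, sn ≐ tn`. -/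
  | decomp {E : EqSet} {f : ℕ} {sl tl : List Trm} :
      (Trm.fn f sl, Trm.fn f tl) ∈ E → sl.length = tl.length →
      MMAStep E ((E \ {(Trm.fn f sl, Trm.fn f tl)}) ∪ {e | e ∈ sl.zip tl})
  /-- Action (3): delete an equation `X ≐ X`. -/
  | delete {E : EqSet} {x : ℕ} :
      (Trm.var x, Trm.var x) ∈ E →
      MMAStep E (E \ {(Trm.var x, Trm.var x)})
  /-- Action (4): replace `t ≐ X` (`t` not a variable) by `X ≐ t`. -/
  | flip {E : EqSet} {t : Trm} {x : ℕ} :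
      (t, Trm.var x) ∈ E → (∀ y, t ≠ Trm.var y) →
      MMAStep E ((E \ {(t, Trm.var x)}) ∪ {(Trm.var x, t)})
  /-- Action (5): on `X ≐ t` with `X ∉ Var(t)` and `X` occurring elsewhere,
  apply `{X/t}` to all other equations. -/
  | elim {E : EqSet} {x : ℕ} {t : Trm} :
      (Trm.var x, t) ∈ E → ¬ Trm.Occurs x t →
      (∃ e ∈ E \ {(Trm.var x, t)}, Trm.Occurs x e.1 ∨ Trm.Occurs x e.2) →
      MMAStep E ({(Trm.var x, t)} ∪ substE (single x t) (E \ {(Trm.var x, t)}))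

/-- Action (2) is applicable to `E`: `E` contains an equation
`f(s1,…,sn) ≐ g(t1,…,tm)` where the two function symbols differ. -/
def ClashApp (E : EqSet) : Prop :=
  ∃ f sl g tl, (Trm.fn f sl, Trm.fn g tl) ∈ E ∧
    (f ≠ g ∨ sl.length ≠ tl.length)

/-- Action (6) (the occur-check) is applicable to `E`: `E` contains an
equation `X ≐ t` with `X ∈ Var(t)` and `X ≠ t`. -/
def OccApp (E : EqSet) : Prop :=
  ∃ x t, (Trm.var x, t) ∈ E ∧ Trm.Occurs x t ∧ t ≠ Trm.var x

/-- One step of the algorithm MMA⁻ (MMA without the occur-check):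
actions (1), (3), (4), (5a), (5b). -/
inductive MMAmStep : EqSet → EqSet → Prop where
  /-- Action (1). -/
  | decomp {E : EqSet} {f : ℕ} {sl tl : List Trm} :
      (Trm.fn f sl, Trm.fn f tl) ∈ E → sl.length = tl.length →
      MMAmStep E ((E \ {(Trm.fn f sl, Trm.fn f tl)}) ∪ {e | e ∈ sl.zip tl})
  /-- Action (3). -/
  | delete {E : EqSet} {x : ℕ} :
      (Trm.var x, Trm.var x) ∈ E →
      MMAmStep E (E \ {(Trm.var x, Trm.var x)})
  /-- Action (4). -/
  | flip {E : EqSet} {t : Trm} {x : ℕ} :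
      (t, Trm.var x) ∈ E → (∀ y, t ≠ Trm.var y) →
      MMAmStep E ((E \ {(t, Trm.var x)}) ∪ {(Trm.var x, t)})
  /-- Action (5a): on `X ≐ Y` with `X, Y` distinct variables and `X`
  occurring elsewhere, apply `{X/Y}` to all other equations. -/
  | elimVar {E : EqSet} {x y : ℕ} :
      (Trm.var x, Trm.var y) ∈ E → x ≠ y →
      (∃ e ∈ E \ {(Trm.var x, Trm.var y)}, Trm.Occurs x e.1 ∨ Trm.Occurs x e.2) →
      MMAmStep E
        ({(Trm.var x, Trm.var y)} ∪
          substE (single x (Trm.var y)) (E \ {(Trm.var x, Trm.var y)}))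
  /-- Action (5b): on `X ≐ t`, `X ≐ u` with `t, u` distinct non-variable
  terms and `|t| ≤ |u|`, replace `X ≐ u` by `t ≐ u`. -/
  | merge {E : EqSet} {x : ℕ} {t u : Trm} :
      (Trm.var x, t) ∈ E → (Trm.var x, u) ∈ E → t ≠ u →
      (∀ y, t ≠ Trm.var y) → (∀ y, u ≠ Trm.var y) → t.size ≤ u.size →
      MMAmStep E ((E \ {(Trm.var x, u)}) ∪ {(t, u)})

/-- `F` is reachable from `E` by (non-failing) actions of MMA. -/
def Reachable (E F : EqSet) : Prop := Relation.ReflTransGen MMAStep E F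

/-- `E` is NSTO: no run of MMA on `E` performs action (6), i.e. the
occur-check action is never applicable along any run. -/
def NSTO (E : EqSet) : Prop := ∀ F, Reachable E F → ¬ OccApp F

/-- `E` is WNSTO: there exists an occur-check free run of MMA on `E`, i.e. a
maximal run that either halts with failure by action (2), or ends with an
equation set to which no action (including (2) and (6)) applies — without
ever performing action (6). -/
def WNSTO (E : EqSet) : Prop :=
  ∃ F, Reachable E F ∧
    (ClashApp F ∨ (¬ ClashApp F ∧ ¬ OccApp F ∧ ∀ F', ¬ MMAStep F F'))

theorem hp_subst_fn (σ : ℕ → Trm) (f : ℕ) (ts : List Trm) :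
    Trm.subst σ (.fn f ts) = .fn f (ts.map (Trm.subst σ)) := by
  rw [Trm.subst]
  congr 1
  exact List.attach_map_val (l := ts) (f := Trm.subst σ) ▸ rfl

theorem hp_subst_var (σ : ℕ → Trm) (x : ℕ) : Trm.subst σ (.var x) = σ x := by
  rw [Trm.subst]

theorem hp_subst_single (σ : ℕ → Trm) (x : ℕ) (t : Trm) (h : σ x = Trm.subst σ t) :
    ∀ s : Trm, Trm.subst σ (Trm.subst (single x t) s) = Trm.subst σ s
  | .var y => by
    rw [hp_subst_var, hp_subst_var]
    unfold single
    split
    · next hy => rw [hy, h]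
    · rw [hp_subst_var]
  | .fn f ts => by
    rw [hp_subst_fn, hp_subst_fn, hp_subst_fn, List.map_map]
    congr 1
    apply List.map_congr_left
    intro a ha
    exact hp_subst_single σ x t h a
decreasing_by
  have := List.sizeOf_lt_of_mem ha
  simp [Trm.fn.sizeOf_spec]; omega

theorem hp_zip (σ : ℕ → Trm) : ∀ sl tl : List Trm, sl.length = tl.length →
    (sl.map (Trm.subst σ) = tl.map (Trm.subst σ) ↔
      ∀ e ∈ sl.zip tl, Trm.subst σ e.1 = Trm.subst σ e.2)
  | [], [], _ => by simp
  | [], _ :: _, h => by simp at h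
  | _ :: _, [], h => by simp at h
  | a :: l, b :: m, h => by
    have ih := hp_zip σ l m (by simpa using h)
    rw [List.zip_cons_cons, List.forall_mem_cons, ← ih, List.map_cons, List.map_cons,
      List.cons.injEq]

theorem hp_replace (σ : ℕ → Trm) (E F : EqSet) (p : Trm × Trm) (hp : p ∈ E)
    (h : Trm.subst σ p.1 = Trm.subst σ p.2 ↔ Solves σ F) :
    Solves σ E ↔ Solves σ ((E \ {p}) ∪ F) := by
  constructor
  · rintro hE e (he | he)
    · exact hE e he.1
    · exact h.1 (hE p hp) e he
  · intro hE e he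
    by_cases hep : e = p
    · subst hep
      exact h.2 fun e he => hE e (Or.inr he)
    · exact hE e (Or.inl ⟨he, hep⟩)

theorem hp_decomp (σ : ℕ → Trm) (E : EqSet) (f : ℕ) (sl tl : List Trm)
    (h : (Trm.fn f sl, Trm.fn f tl) ∈ E) (hl : sl.length = tl.length) :
    Solves σ E ↔ Solves σ ((E \ {(Trm.fn f sl, Trm.fn f tl)}) ∪ {e | e ∈ sl.zip tl}) := by
  apply hp_replace σ E _ _ h
  simp only [hp_subst_fn, Trm.fn.injEq, true_and]
  exact hp_zip σ sl tl hl

theorem hp_delete (σ : ℕ → Trm) (E : EqSet) (p : Trm) :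
    Solves σ E ↔ Solves σ (E \ {(p, p)}) := by
  constructor
  · exact fun hE e he => hE e he.1
  · intro hE e he
    by_cases hep : e = (p, p)
    · rw [hep]
    · exact hE e ⟨he, hep⟩

theorem hp_flip (σ : ℕ → Trm) (E : EqSet) (s t : Trm) (h : (s, t) ∈ E) :
    Solves σ E ↔ Solves σ ((E \ {(s, t)}) ∪ {(t, s)}) := by
  apply hp_replace σ E _ _ h
  simp only [Solves, Set.mem_singleton_iff, forall_eq]
  exact eq_comm

theorem hp_elim (σ : ℕ → Trm) (E : EqSet) (x : ℕ) (t : Trm) (h : (Trm.var x, t) ∈ E) :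
    Solves σ E ↔
      Solves σ ({(Trm.var x, t)} ∪ substE (single x t) (E \ {(Trm.var x, t)})) := by
  constructor
  · intro hE
    have h1 := hE _ h
    simp only [hp_subst_var] at h1
    rintro e (he | ⟨e', he', rfl⟩)
    · rw [Set.mem_singleton_iff.1 he]
      exact hE _ h
    · simp only [hp_subst_single σ x t h1]
      exact hE e' he'.1
  · intro hE e he
    have h0 := hE (Trm.var x, t) (Or.inl rfl)
    have h1 := h0
    simp only [hp_subst_var] at h1
    by_cases hep : e = (Trm.var x, t)
    · rw [hep]; exact h0
    · have h2 := hE _ (Or.inr ⟨e, ⟨he, hep⟩, rfl⟩)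
      simpa only [hp_subst_single σ x t h1] using h2

theorem hp_merge (σ : ℕ → Trm) (E : EqSet) (s t u : Trm) (h : (s, t) ∈ E)
    (h' : (s, u) ∈ E) (hne : t ≠ u) :
    Solves σ E ↔ Solves σ ((E \ {(s, u)}) ∪ {(t, u)}) := by
  constructor
  · rintro hE e (he | he)
    · exact hE e he.1
    · rw [Set.mem_singleton_iff.1 he]
      exact (hE _ h).symm.trans (hE _ h')
  · intro hE e he
    by_cases hep : e = (s, u)
    · rw [hep]
      have h1 := hE (s, t) (Or.inl ⟨h, fun hh => hne (congrArg Prod.snd hh)⟩)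
      have h2 := hE (t, u) (Or.inr rfl)
      exact h1.trans h2
    · exact hE e (Or.inl ⟨he, hep⟩)

/-- If an equation set `E′` is obtained from a finite equation set `E` by one of
the actions (1), (3), (4), (5) of MMA, or by one of the actions (5a), (5b)
of MMA⁻ (actions (1), (3), (4) being common to both algorithms), then `E`
and `E′` have exactly the same solutions; in particular, `E` is unifiable
iff `E′` is. -/
theorem stmt6 (E E' : EqSet) (hfin : E.Finite)
    (hstep : MMAStep E E' ∨ MMAmStep E E') :
    (∀ σ, Solves σ E ↔ Solves σ E') ∧ (Unifiable E ↔ Unifiable E') := by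
  have key : ∀ σ, Solves σ E ↔ Solves σ E' := by
    intro σ
    rcases hstep with h | h
    · cases h with
      | decomp h hl => exact hp_decomp σ E _ _ _ h hl
      | delete h => exact hp_delete σ E _
      | flip h _ => exact hp_flip σ E _ _ h
      | elim h _ _ => exact hp_elim σ E _ _ h
    · cases h with
      | decomp h hl => exact hp_decomp σ E _ _ _ h hl
      | delete h => exact hp_delete σ E _
      | flip h _ => exact hp_flip σ E _ _ h
      | elimVar h _ _ => exact hp_elim σ E _ _ h
      | merge h h' hne _ _ _ => exact hp_merge σ E _ _ _ h h' hne
  exact ⟨key, exists_congr key⟩
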